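/- arXiv:2509.21568 — 2 statements merged into one kernel-verified Lean document; each statement's English description precedes it below -/
import Mathlib

section
/- Let T1 and T2 be two trails of a knot-type 1-linkoid universe (one whose two endpoints lie in the same face). Then T2 can be obtained from T1 by a finite sequence of double exchanges, where each double exchange resmooths exactly two smoothing sites and yields a trail at each step. -/
/-- Number of orbits of a function on a type (used to count vertices/faces of a
combinatorial map). -/
noncomputable def orbCount {D : Type} (f : D → D) : ℕ := Nat.card (Quot (fun a b => f a = b))

/-- A 1-linkoid universe, encoded as a planar combinatorial map on darts (half-edges):
`σ` is the rotation at vertices (4-cycles at crossings, fixed points at the two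
degree-1 endpoints), `α` the edge involution, `col` an alternating checkerboard
colouring of the darts around each crossing, `conn` connectivity, and `euler`
Euler's formula V + F = E + 2 (planarity). -/
structure LinkoidUniverse where
  D : Type
  [finD : Fintype D]
  [decD : DecidableEq D]
  σ : Equiv.Perm D
  α : D → D
  α_invol : Function.Involutive α
  α_ne : ∀ d, α d ≠ d
  col : D → Bool
  col_alt : ∀ d, σ d ≠ d → col (σ d) = ! col d
  tail : D
  head : D
  tail_ne_head : tail ≠ head
  σ_tail : σ tail = tail
  σ_head : σ head = head
  endpoints_only : ∀ d, σ d = d → d = tail ∨ d = head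
  deg4 : ∀ d, σ d ≠ d → (σ ^ 4) d = d ∧ (σ ^ 2) d ≠ d
  conn : ∀ e e' : D, Relation.EqvGen (fun a c => α a = c ∨ σ a = c) e e'
  euler : orbCount (⇑σ) + orbCount (⇑σ ∘ α) = Fintype.card D / 2 + 2

attribute [instance] LinkoidUniverse.finD LinkoidUniverse.decD

namespace LinkoidUniverse

variable (U : LinkoidUniverse)

/-- Vertices are σ-orbits of darts. -/
def Vertex := Quot (fun a b : U.D => U.σ a = b)
/-- Faces are orbits of the face permutation σ ∘ α. -/
def Face := Quot (fun a b : U.D => U.σ (U.α a) = b)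
def vertexOf (d : U.D) : U.Vertex := Quot.mk _ d
def faceOf (d : U.D) : U.Face := Quot.mk _ d
/-- A dart lying at a degree-4 vertex (crossing). -/
def IsCrossingDart (d : U.D) : Prop := U.σ d ≠ d
/-- Crossings: vertices other than the two endpoints. -/
def Crossing := {v : U.Vertex // v ≠ U.vertexOf U.tail ∧ v ≠ U.vertexOf U.head}
/-- Incidence of a face and a vertex (they share a corner dart). -/
def Incident (f : U.Face) (v : U.Vertex) : Prop :=
  ∃ d, U.faceOf d = f ∧ U.vertexOf d = v

/-- A smoothing choice, one Bool per crossing (so constant on σ-cycles). -/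
def ConstOnCycles (b : U.D → Bool) : Prop := ∀ d, b (U.σ d) = b d
/-- The strand-transition map through the smoothed crossings determined by `b`. -/
def trans (b : U.D → Bool) : U.D → U.D :=
  fun e => if U.col e = b e then U.σ e else U.σ.symm e
/-- The diagram with all crossings smoothed according to `b` is connected. -/
def SmoothedConnected (b : U.D → Bool) : Prop :=
  ∀ e e' : U.D, Relation.EqvGen (fun a c => U.α a = c ∨ U.trans b a = c) e e'

/-- A trail: a non-crossing smoothing of every crossing whose result is a single
connected (hence simple) arc from tail to head. -/
structure Trail where
  b : U.D → Bool
  const : U.ConstOnCycles b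
  norm : ∀ d, U.σ d = d → b d = false
  conn : U.SmoothedConnected b

open Classical in
/-- Transition map when only the single crossing containing the dart `d0` is smoothed,
in direction `b0`. -/
noncomputable def transOne (d0 : U.D) (b0 : Bool) : U.D → U.D := fun e =>
  if U.σ.SameCycle d0 e ∧ U.σ e ≠ e then
    (if U.col e = b0 then U.σ e else U.σ.symm e) else U.σ e

/-- Connectivity of the diagram after smoothing only the crossing of `d0` in
direction `b0`. -/
def ConnectedOne (d0 : U.D) (b0 : Bool) : Prop :=
  ∀ e e' : U.D, Relation.EqvGen (fun a c => U.α a = c ∨ U.transOne d0 b0 a = c) e e'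

/-- A nugatory crossing: exactly one of its two smoothings keeps the diagram connected. -/
def Nugatory (d0 : U.D) : Prop := Xor' (U.ConnectedOne d0 true) (U.ConnectedOne d0 false)

/-- The (unordered) pair of faces merged when the crossing `v` is smoothed according
to `b`. -/
def MergesAt (b : U.D → Bool) (v : U.Vertex) (f g : U.Face) : Prop :=
  ∃ d, U.vertexOf d = v ∧ U.σ d ≠ d ∧
    (if b d then ({f, g} : Set U.Face) = {U.faceOf d, U.faceOf ((U.σ ^ 2) d)}
     else ({f, g} : Set U.Face) = {U.faceOf (U.σ d), U.faceOf ((U.σ ^ 3) d)})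

/-- The set of crossings at which two smoothing choices differ. -/
def diffSet (b b' : U.D → Bool) : Set U.Vertex :=
  {v | ∃ d, U.vertexOf d = v ∧ b d ≠ b' d}

end LinkoidUniverse

/-- A starred 1-linkoid universe: the star sits in the face of the dart `star`,
which is the unbounded face. -/
structure StarredLinkoid extends LinkoidUniverse where
  star : D

namespace StarredLinkoid

variable (U : StarredLinkoid)

def outerFace : U.Face := U.faceOf U.star
/-- Bounded faces. -/
def BFace := {f : U.Face // f ≠ U.outerFace}
/-- A clock state: a bijective assignment of each bounded face to an incident crossing
(the marker of the face). -/
def ClockState :=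
  { m : U.BFace → U.Crossing // Function.Bijective m ∧ ∀ f, U.Incident f.1 (m f).1 }

end StarredLinkoid

/-- A starred 1-linkoid universe together with its clockwise and counterclockwise
clock-move relations on clock states (a clock move rotates a pair of markers in
faces sharing a boundary edge, or the head-adjacent marker, by 90 degrees). -/
structure ClockSystem extends StarredLinkoid where
  CW : toStarredLinkoid.ClockState → toStarredLinkoid.ClockState → Prop
  CCW : toStarredLinkoid.ClockState → toStarredLinkoid.ClockState → Prop
  cw_ccw : ∀ s t, CW s t ↔ CCW t s

namespace ClockSystem

variable (C : ClockSystem)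

/-- A clocked state: admits only clockwise clock moves. -/
def IsClocked (s : C.ClockState) : Prop := ∀ t, ¬ C.CCW s t
/-- A counter-clocked state: admits only counterclockwise clock moves. -/
def IsCounterClocked (s : C.ClockState) : Prop := ∀ t, ¬ C.CW s t

end ClockSystem

/-!
Glue the two endpoints of a knot-type universe into one vertex of degree two. The resulting map is
still planar and all its vertices have even degree, so its faces have a checkerboard colouring;
orienting every edge with a fixed colour on its left makes the edges alternate between outgoing and
incoming around each crossing, and every smoothing respects this orientation. A smoothing therefore
becomes a permutation of the outgoing darts, and it is a trail exactly when this permutation is a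
single cycle. Resmoothing a site multiplies the permutation by the transposition of the two outgoing
darts there, which splits the cycle of a trail in two. Since the second trail is a single cycle, the
two smoothings differ at a further site whose outgoing darts lie in different parts, and resmoothing
it merges the parts into one cycle again.
-/

section Permutations

open Equiv Equiv.Perm

variable {β : Type*} {f τ : Perm β} {p q x y : β}

theorem isCycleOn_univ_iff : f.IsCycleOn Set.univ ↔ ∀ x y, f.SameCycle x y :=
  ⟨fun h _ _ => h.2 trivial trivial,
    fun h => ⟨Set.bijOn_univ.2 f.bijective, fun _ _ _ _ => h _ _⟩⟩

theorem swap_mul_pow_apply [DecidableEq β] {n : ℕ} (hn : 0 < n)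
    (h : ∀ i, 0 < i → i < n → (f ^ i) x ≠ p ∧ (f ^ i) x ≠ q) :
    ((swap p q * f) ^ n) x = swap p q ((f ^ n) x) := by
  induction n, hn using Nat.le_induction with
  | base => simp
  | succ n hn ih =>
    obtain ⟨hp, hq⟩ := h n hn n.lt_succ_self
    rw [pow_succ', mul_apply, ih fun i hi hin => h i hi (hin.trans n.lt_succ_self),
      swap_apply_of_ne_of_ne hp hq, mul_apply, ← mul_apply f, ← pow_succ']

/- Alternating `s` and `t` along a path in their orbit advances or rewinds `t * s`. -/
theorem sameCycle_mul_of_eqvGen {s t : Perm β} (hs : Function.Involutive s)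
    (ht : Function.Involutive t) {o : β → Bool} (hos : ∀ z, o (s z) = !o z)
    (hot : ∀ z, o (t z) = !o z) (h : Relation.EqvGen (fun a c => s a = c ∨ t a = c) x y)
    (hx : o x) (hy : o y) : (t * s).SameCycle x y := by
  let base : β → β := fun z => if o z then z else s z
  suffices hbase : (t * s).SameCycle (base x) (base y) by simpa [base, hx, hy] using hbase
  clear hx hy
  induction h with
  | rel a c hac =>
    rcases hac with rfl | rfl <;> cases ha : o a
    · simp [base, hos, ha, SameCycle.rfl]
    · simp [base, hos, ha, hs a, SameCycle.rfl]
    · exact ⟨1, by simp [base, hot, ha, hs a]⟩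
    · exact SameCycle.symm ⟨1, by simp [base, hot, ha, hs (t a), ht a]⟩
  | refl a => exact .rfl
  | symm a c _ ih => exact ih.symm
  | trans a b c _ _ hab hbc => exact hab.trans hbc

variable [Finite β]

theorem pred_of_sameCycle {P : β → Prop} (hP : ∀ z, P z → P (f z)) (h : f.SameCycle x y)
    (hx : P x) : P y := by
  obtain ⟨k, rfl⟩ := h.exists_nat_pow_eq
  induction k with
  | zero => exact hx
  | succ k ih =>
    rw [pow_succ', mul_apply]
    exact hP _ (ih (sameCycle_pow_right.2 .rfl))

theorem quot_mk_eq_iff_sameCycle :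
    Quot.mk (fun a b => f a = b) x = Quot.mk _ y ↔ f.SameCycle x y := by
  refine ⟨fun h => ?_, fun h => pred_of_sameCycle
    (P := fun z => Quot.mk (fun a b => f a = b) x = Quot.mk _ z) (fun z hz => ?_) h rfl⟩
  · induction Quot.eqvGen_exact h with
    | rel a b hab => exact ⟨1, hab⟩
    | refl a => exact .rfl
    | symm a b _ ih => exact (ih (Quot.eqvGen_sound ‹_›)).symm
    | trans a b c hab hbc iab ibc =>
      exact (iab (Quot.eqvGen_sound hab)).trans (ibc (Quot.eqvGen_sound hbc))
  · exact hz.trans (Quot.sound rfl)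

theorem not_sameCycle_of_pow_apply_eq {n : ℕ} (hn : 0 < n) (hp : (f ^ n) p = p)
    (hq : ∀ i < n, (f ^ i) p ≠ q) : ¬ f.SameCycle p q := by
  intro h
  obtain ⟨k, hk⟩ := h.exists_nat_pow_eq
  apply hq (k % n) (Nat.mod_lt k hn)
  have hper : Function.IsPeriodicPt f n p := by rwa [← iterate_eq_pow] at hp
  rw [← hk, ← iterate_eq_pow, ← iterate_eq_pow, hper.iterate_mod_apply]

theorem exists_not_sameCycle_apply (hτf : (τ * f).IsCycleOn Set.univ)
    (hf : ¬ f.IsCycleOn Set.univ) : ∃ x, ¬ f.SameCycle x (τ x) := by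
  contrapose! hf
  refine isCycleOn_univ_iff.2 fun x y => pred_of_sameCycle (P := f.SameCycle x) (fun z hz => ?_)
    (isCycleOn_univ_iff.1 hτf x y) .rfl
  exact (sameCycle_apply_right.2 hz).trans (hf (f z))

variable [DecidableEq β]

theorem sameCycle_swap_mul_iff (hpq : p ≠ q) :
    (swap p q * f).SameCycle p q ↔ ¬ f.SameCycle p q := by
  have hreturn : ∃ n, 0 < n ∧ ((f ^ n) p = p ∨ (f ^ n) p = q) :=
    ⟨orderOf f, orderOf_pos f, by simp [pow_orderOf_eq_one]⟩
  classical
  obtain ⟨hn, hfn⟩ := Nat.find_spec hreturn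
  set n := Nat.find hreturn
  have hmin : ∀ i, 0 < i → i < n → (f ^ i) p ≠ p ∧ (f ^ i) p ≠ q := fun i hi hin => by
    simpa [hi] using Nat.find_min hreturn hin
  have hgn := swap_mul_pow_apply hn hmin
  rcases hfn with hfn | hfn
  · have hg : (swap p q * f).SameCycle p q := ⟨n, by simp [hgn, hfn]⟩
    refine iff_of_true hg (not_sameCycle_of_pow_apply_eq hn hfn fun i hi => ?_)
    rcases i.eq_zero_or_pos with rfl | hi0
    exacts [hpq, (hmin i hi0 hi).2]
  · have hf : f.SameCycle p q := ⟨n, by simpa using hfn⟩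
    refine iff_of_false (not_sameCycle_of_pow_apply_eq hn (by simp [hgn, hfn]) fun i hi => ?_)
      (not_not.2 hf)
    rcases i.eq_zero_or_pos with rfl | hi0
    · exact hpq
    · obtain ⟨hp, hq⟩ := hmin i hi0 hi
      rwa [swap_mul_pow_apply hi0 fun j hj hji => hmin j hj (hji.trans hi),
        swap_apply_of_ne_of_ne hp hq]

theorem sameCycle_of_swap_mul (hpq : f.SameCycle p q) (h : (swap p q * f).SameCycle x y) :
    f.SameCycle x y := by
  refine pred_of_sameCycle (P := f.SameCycle x) (fun z hz => ?_) h .rfl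
  have hfz : f.SameCycle x (f z) := sameCycle_apply_right.2 hz
  rw [mul_apply]
  by_cases hp : f z = p
  · rw [hp, swap_apply_left]
    exact (hp ▸ hfz).trans hpq
  by_cases hq : f z = q
  · rw [hq, swap_apply_right]
    exact (hq ▸ hfz).trans hpq.symm
  rwa [swap_apply_of_ne_of_ne hp hq]

theorem sameCycle_swap_mul_or (h : f.SameCycle p x) :
    (swap p q * f).SameCycle p x ∨ (swap p q * f).SameCycle q x := by
  set g := swap p q * f with hg
  refine pred_of_sameCycle (P := fun z => g.SameCycle p z ∨ g.SameCycle q z) (fun z hz => ?_) h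
    (.inl .rfl)
  by_cases hp : f z = p
  · exact .inl (hp ▸ .rfl)
  by_cases hq : f z = q
  · exact .inr (hq ▸ .rfl)
  rw [← swap_apply_of_ne_of_ne hp hq, ← mul_apply, ← hg]
  simpa only [sameCycle_apply_right] using hz

theorem isCycleOn_univ_swap_mul (hpq : ¬ f.SameCycle p q)
    (hcover : ∀ x, f.SameCycle p x ∨ f.SameCycle q x) : (swap p q * f).IsCycleOn Set.univ := by
  have hne : p ≠ q := fun h => hpq (h ▸ .rfl)
  have hg : (swap p q * f).SameCycle p q := (sameCycle_swap_mul_iff hne).2 hpq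
  have hlift : ∀ {x y}, f.SameCycle x y → (swap p q * f).SameCycle x y := fun h =>
    sameCycle_of_swap_mul hg (by rwa [swap_mul_self_mul])
  have hp : ∀ x, (swap p q * f).SameCycle p x := fun x =>
    (hcover x).elim hlift fun h => hg.trans (hlift h)
  exact isCycleOn_univ_iff.2 fun x y => (hp x).symm.trans (hp y)

/- Multiplying `f` by the transposition of `p` and `τ p` splits its cycle in two. Since `τ * f` is a
single cycle, some other transposition of `τ` must exchange points of the two parts, and
multiplying by it merges them again. -/
theorem exists_isCycleOn_univ_swap_mul_swap_mul (hf : f.IsCycleOn Set.univ)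
    (hτf : (τ * f).IsCycleOn Set.univ) (hτ : Function.Involutive τ) (hp : τ p ≠ p) :
    ∃ q, τ q ≠ q ∧ q ≠ p ∧ q ≠ τ p ∧
      (swap q (τ q) * (swap p (τ p) * f)).IsCycleOn Set.univ := by
  set h := swap p (τ p) * f with hh
  have hsplit : ¬ h.SameCycle p (τ p) := fun hc =>
    (sameCycle_swap_mul_iff hp.symm).1 hc (isCycleOn_univ_iff.1 hf _ _)
  have hcover : ∀ x, h.SameCycle p x ∨ h.SameCycle (τ p) x := fun x =>
    sameCycle_swap_mul_or (isCycleOn_univ_iff.1 hf p x)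
  obtain ⟨q, hq⟩ : ∃ q, ¬ h.SameCycle q ((τ * swap p (τ p)) q) := by
    refine exists_not_sameCycle_apply ?_ fun hc => hsplit (isCycleOn_univ_iff.1 hc _ _)
    rwa [hh, mul_assoc, swap_mul_self_mul]
  have hqp : q ≠ p := by
    rintro rfl
    simp only [mul_apply, swap_apply_left, hτ q] at hq
    exact hq .rfl
  have hqτp : q ≠ τ p := by
    rintro rfl
    simp only [mul_apply, swap_apply_right] at hq
    exact hq .rfl
  rw [mul_apply, swap_apply_of_ne_of_ne hqp hqτp] at hq
  refine ⟨q, fun hτq => hq (hτq.symm ▸ .rfl), hqp, hqτp, isCycleOn_univ_swap_mul hq fun x => ?_⟩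
  rcases hcover q with hpq | hpq <;> rcases hcover (τ q) with hpτq | hpτq
  · exact absurd (hpq.symm.trans hpτq) hq
  · exact (hcover x).imp hpq.symm.trans hpτq.symm.trans
  · exact (hcover x).symm.imp hpq.symm.trans hpτq.symm.trans
  · exact absurd (hpq.symm.trans hpτq) hq

end Permutations

section InvariantFunctions

open Equiv Module

/-- The functions on `D` that are constant along the orbits of `f`. For `f` a rotation, an edge
involution or a face permutation of a combinatorial map, these are the functions on its vertices,
edges or faces, so that vertex, edge and face functions all live in the single space `D → K`. -/
def invariantFunctions {D : Type*} (K : Type*) [Semiring K] (f : D → D) : Submodule K (D → K) where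
  carrier := {h | ∀ d, h (f d) = h d}
  add_mem' hg hh d := by simp only [Pi.add_apply, hg d, hh d]
  zero_mem' _ := rfl
  smul_mem' c h hh d := by simp only [Pi.smul_apply, hh d]

theorem mem_invariantFunctions {D K : Type*} [Semiring K] {f : D → D} {h : D → K} :
    h ∈ invariantFunctions K f ↔ ∀ d, h (f d) = h d := Iff.rfl

theorem finrank_invariantFunctions {D : Type} [Finite D] (K : Type*) [Field K] (f : D → D) :
    finrank K (invariantFunctions K f) = orbCount f := by
  let pullback := LinearMap.funLeft K K (Quot.mk fun a b => f a = b)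
  have hrange : LinearMap.range pullback = invariantFunctions K f := by
    ext h
    refine ⟨?_, fun hh => ⟨Quot.lift h fun a b hab => hab ▸ (hh a).symm, rfl⟩⟩
    rintro ⟨g, rfl⟩ d
    exact congrArg g (Quot.sound (r := fun a b => f a = b) rfl).symm
  have := Fintype.ofFinite (Quot fun a b => f a = b)
  rw [← hrange, LinearMap.finrank_range_of_inj
    (LinearMap.funLeft_injective_of_surjective K K _ Quot.mk_surjective),
    finrank_fintype_fun_eq_card, orbCount, Nat.card_eq_fintype_card]

theorem finrank_map_add_finrank_inf_ker {K V W : Type*} [Field K] [AddCommGroup V] [Module K V]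
    [AddCommGroup W] [Module K W] [FiniteDimensional K V] (L : V →ₗ[K] W) (S : Submodule K V) :
    finrank K (S.map L) + finrank K (S ⊓ LinearMap.ker L : Submodule K V) = finrank K S := by
  rw [← LinearMap.range_domRestrict, ← Submodule.map_comap_subtype, ← LinearMap.ker_domRestrict,
    Submodule.finrank_map_subtype_eq, LinearMap.finrank_range_add_finrank_ker]

theorem mem_of_forall_dotProduct_eq_zero {ι K : Type*} [Fintype ι] [Field K]
    {A N : Submodule K (ι → K)} (horth : ∀ a ∈ A, ∀ n ∈ N, n ⬝ᵥ a = 0)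
    (hdim : Fintype.card ι ≤ finrank K A + finrank K N) {x : ι → K}
    (hx : ∀ n ∈ N, n ⬝ᵥ x = 0) : x ∈ A := by
  classical
  let B := Matrix.toBilin' (1 : Matrix ι ι K)
  have hB : B.Nondegenerate :=
    LinearMap.BilinForm.nondegenerate_toBilin'_of_det_ne_zero' _ (by simp)
  have hmem : ∀ z, z ∈ B.orthogonal N ↔ ∀ n ∈ N, n ⬝ᵥ z = 0 := fun z => by
    simp [B, LinearMap.BilinForm.mem_orthogonal_iff, Matrix.toBilin'_apply']
  have hA : A = B.orthogonal N := by
    refine Submodule.eq_of_le_of_finrank_le (fun a ha => (hmem a).2 (horth a ha)) ?_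
    rw [LinearMap.BilinForm.finrank_orthogonal hB, finrank_fintype_fun_eq_card]
    omega
  exact hA ▸ (hmem x).2 hx

section Swap

theorem mem_invariantFunctions_swap_mul {D K : Type*} [DecidableEq D] [Semiring K] {f : Perm D}
    {p q : D} {h : D → K} (hpq : h p = h q) :
    h ∈ invariantFunctions K (swap p q * f) ↔ h ∈ invariantFunctions K f := by
  have hswap : ∀ d, h (swap p q d) = h d := fun d => by
    rw [swap_apply_def]
    split_ifs with hp hq
    exacts [hp ▸ hpq.symm, hq ▸ hpq, rfl]
  simp only [mem_invariantFunctions, Perm.mul_apply, hswap]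

variable {D : Type} [Finite D] [DecidableEq D] {p q : D}

theorem orbCount_le_orbCount_swap_mul_add_one (f : Perm D) (p q : D) :
    orbCount f ≤ orbCount (swap p q * f) + 1 := by
  let difference : (D → ℚ) →ₗ[ℚ] ℚ := LinearMap.proj (R := ℚ) (φ := fun _ => ℚ) p - LinearMap.proj q
  have hle : invariantFunctions ℚ f ⊓ LinearMap.ker difference ≤
      invariantFunctions ℚ (swap p q * f) := fun h ⟨hf, hker⟩ =>
    (mem_invariantFunctions_swap_mul (sub_eq_zero.1 (show h p - h q = 0 from hker))).2 hf
  have hrank := finrank_map_add_finrank_inf_ker difference (invariantFunctions ℚ f)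
  have hmap := ((invariantFunctions ℚ f).map difference).finrank_le
  have hker := Submodule.finrank_mono hle
  rw [finrank_self] at hmap
  rw [finrank_invariantFunctions] at hrank hker
  omega

theorem orbCount_lt_orbCount_swap_mul {f : Perm D} (hne : p ≠ q) (hpq : f.SameCycle p q) :
    orbCount f < orbCount (swap p q * f) := by
  rw [← finrank_invariantFunctions ℚ, ← finrank_invariantFunctions ℚ]
  have heq : ∀ h ∈ invariantFunctions ℚ f, h p = h q := fun h hh =>
    pred_of_sameCycle (P := fun z => h p = h z) (fun z hz => hz.trans (hh z).symm) hpq rfl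
  refine Submodule.finrank_lt_finrank_of_lt (SetLike.lt_iff_le_and_exists.2
    ⟨fun h hh => (mem_invariantFunctions_swap_mul (heq h hh)).2 hh, ?_⟩)
  classical
  let cycleOfP : D → ℚ := fun d => if (swap p q * f).SameCycle p d then 1 else 0
  refine ⟨cycleOfP, fun d => if_congr Perm.sameCycle_apply_right rfl rfl, fun hmem => ?_⟩
  have hsplit : ¬ (swap p q * f).SameCycle p q := fun h => (sameCycle_swap_mul_iff hne).1 h hpq
  simpa [cycleOfP, hsplit, Perm.SameCycle.rfl] using heq cycleOfP hmem

end Swap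

section PlanarMap

variable {D : Type*} {σ α : D → D}

theorem apply_eq_of_eqvGen {K : Type*} [Semiring K]
    (hconn : ∀ d e, Relation.EqvGen (fun a c => α a = c ∨ σ a = c) d e) {h : D → K}
    (hσ : h ∈ invariantFunctions K σ) (hα : h ∈ invariantFunctions K α) (d e : D) : h d = h e := by
  induction hconn d e with
  | rel a c hac =>
    rcases hac with rfl | rfl
    exacts [(hα a).symm, (hσ a).symm]
  | refl a => rfl
  | symm a c _ ih => exact ih.symm
  | trans a b c _ _ hab hbc => exact hab.trans hbc

theorem finrank_invariantFunctions_inf_le_one {K : Type*} [Field K]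
    (hconn : ∀ d e, Relation.EqvGen (fun a c => α a = c ∨ σ a = c) d e) :
    finrank K (invariantFunctions K σ ⊓ invariantFunctions K α : Submodule K (D → K)) ≤ 1 := by
  rcases isEmpty_or_nonempty D with hD | ⟨⟨d₀⟩⟩
  · simp [finrank_zero_of_subsingleton]
  · refine finrank_le_one ⟨1, fun _ => rfl, fun _ => rfl⟩ fun ⟨h, hσ, hα⟩ => ⟨h d₀, ?_⟩
    ext d
    simpa using apply_eq_of_eqvGen hconn hσ hα d₀ d

theorem invariantFunctions_comp_inf_le {K : Type*} [Semiring K] (hα : Function.Involutive α) :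
    invariantFunctions K (σ ∘ α) ⊓ invariantFunctions K α ≤
      invariantFunctions K σ ⊓ invariantFunctions K α :=
  fun h ⟨hφ, hhα⟩ => ⟨fun d => by rw [← hhα d, ← hφ (α d), Function.comp_apply, hα d], hhα⟩

/-- The mod 2 coboundary `f ↦ f + f ∘ α`, whose value at a dart of a combinatorial map with edge
involution `α` is the sum of `f` over the two sides of the edge. -/
def edgeSum (α : D → D) : (D → ZMod 2) →ₗ[ZMod 2] (D → ZMod 2) :=
  LinearMap.id + LinearMap.funLeft (ZMod 2) (ZMod 2) α

theorem edgeSum_apply (f : D → ZMod 2) (d : D) : edgeSum α f d = f d + f (α d) := rfl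

theorem ker_edgeSum : LinearMap.ker (edgeSum α) = invariantFunctions (ZMod 2) α := by
  ext f
  simp only [LinearMap.mem_ker, funext_iff, edgeSum_apply, Pi.zero_apply, CharTwo.add_eq_zero,
    mem_invariantFunctions, eq_comm]

theorem range_edgeSum_le (hα : Function.Involutive α) :
    LinearMap.range (edgeSum α) ≤ invariantFunctions (ZMod 2) α := by
  rintro _ ⟨f, rfl⟩ d
  rw [edgeSum_apply, edgeSum_apply, hα d, add_comm]

variable [Fintype D]

theorem card_le_two_mul_finrank_invariantFunctions (hα : Function.Involutive α) :
    Fintype.card D ≤ 2 * finrank (ZMod 2) (invariantFunctions (ZMod 2) α) := by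
  have hrank := (edgeSum α).finrank_range_add_finrank_ker
  have hle := Submodule.finrank_mono (range_edgeSum_le hα)
  rw [ker_edgeSum, finrank_fintype_fun_eq_card] at hrank
  omega

theorem dotProduct_edgeSum (hα : Function.Involutive α) (u f : D → ZMod 2) :
    u ⬝ᵥ edgeSum α f = edgeSum α u ⬝ᵥ f := by
  simp only [dotProduct, edgeSum_apply, mul_add, add_mul, Finset.sum_add_distrib]
  congr 1
  rw [← Equiv.sum_comp hα.toPerm]
  simp [hα _]

theorem dotProduct_comp_perm_eq {σ : Perm D} {u : D → ZMod 2}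
    (hu : u ∈ invariantFunctions (ZMod 2) σ) (f : D → ZMod 2) : u ⬝ᵥ (f ∘ σ) = u ⬝ᵥ f := by
  rw [dotProduct, dotProduct, ← Equiv.sum_comp σ fun d => u d * f d]
  exact Finset.sum_congr rfl fun d _ => by rw [hu d, Function.comp_apply]

theorem dotProduct_edgeSum_eq_zero_of_mem_invariantFunctions (hα : Function.Involutive α)
    {u : D → ZMod 2} (hu : u ∈ invariantFunctions (ZMod 2) α) (f : D → ZMod 2) :
    u ⬝ᵥ edgeSum α f = 0 := by
  rw [dotProduct_edgeSum hα, LinearMap.mem_ker.1 (ker_edgeSum.ge hu), zero_dotProduct]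

theorem dotProduct_edgeSum_eq_zero_of_mem_invariantFunctions_comp {σ : Perm D}
    (hα : Function.Involutive α) {u f : D → ZMod 2} (hu : u ∈ invariantFunctions (ZMod 2) σ)
    (hf : f ∈ invariantFunctions (ZMod 2) (σ ∘ α)) : u ⬝ᵥ edgeSum α f = 0 := by
  have hfα : edgeSum α f = f + f ∘ σ := funext fun d => by
    have hd := hf (α d)
    rw [Function.comp_apply, hα d] at hd
    rw [edgeSum_apply, ← hd, Pi.add_apply, Function.comp_apply]
  rw [hfα, dotProduct_add, dotProduct_comp_perm_eq hu, CharTwo.add_self_eq_zero]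

theorem dotProduct_one_eq_zero_of_alternating {σ : Perm D} {u c : D → ZMod 2}
    (hu : u ∈ invariantFunctions (ZMod 2) σ) (hc : ∀ d, c (σ d) = c d + 1) : u ⬝ᵥ 1 = 0 := by
  have hone : 1 = c + c ∘ σ := funext fun d => by
    rw [Pi.add_apply, Function.comp_apply, hc d, ← add_assoc, CharTwo.add_self_eq_zero, zero_add,
      Pi.one_apply]
  rw [hone, dotProduct_add, dotProduct_comp_perm_eq hu, CharTwo.add_self_eq_zero]

theorem dotProduct_one_eq_zero_of_involutive (hα : Function.Involutive α) (hα_ne : ∀ d, α d ≠ d)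
    {u : D → ZMod 2} (hu : u ∈ invariantFunctions (ZMod 2) α) : u ⬝ᵥ 1 = 0 := by
  rw [dotProduct_one]
  exact Finset.sum_involution (fun d _ => α d)
    (fun d _ => by rw [hu d, CharTwo.add_self_eq_zero]) (fun d _ _ => hα_ne d)
    (fun _ _ => Finset.mem_univ _) (fun d _ => hα d)

theorem card_le_finrank_map_edgeSum_add_finrank_sup {D : Type} [Fintype D] {σ α : D → D}
    (hα : Function.Involutive α)
    (hconn : ∀ d e, Relation.EqvGen (fun a c => α a = c ∨ σ a = c) d e)
    (heuler : Fintype.card D / 2 + 2 ≤ orbCount σ + orbCount (σ ∘ α)) :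
    Fintype.card D ≤ finrank (ZMod 2) ((invariantFunctions (ZMod 2) (σ ∘ α)).map (edgeSum α)) +
      finrank (ZMod 2) (invariantFunctions (ZMod 2) σ ⊔ invariantFunctions (ZMod 2) α :
        Submodule (ZMod 2) (D → ZMod 2)) := by
  have hedge := card_le_two_mul_finrank_invariantFunctions hα
  have hconst := finrank_invariantFunctions_inf_le_one (K := ZMod 2) hconn
  have hker := Submodule.finrank_mono (invariantFunctions_comp_inf_le (K := ZMod 2) (σ := σ) hα)
  have hface := finrank_map_add_finrank_inf_ker (edgeSum α) (invariantFunctions (ZMod 2) (σ ∘ α))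
  have hsup := Submodule.finrank_sup_add_finrank_inf_eq (invariantFunctions (ZMod 2) σ)
    (invariantFunctions (ZMod 2) α)
  rw [ker_edgeSum, finrank_invariantFunctions] at hface
  rw [finrank_invariantFunctions (ZMod 2) σ] at hsup
  omega

/- Summing the two sides of an edge turns face functions into edge functions orthogonal to all
vertex and all edge functions. Euler's formula makes the dimensions complementary, so over `ZMod 2`
the constant edge function `1` is of this form as soon as it is orthogonal to the vertex functions,
that is, as soon as all vertex degrees are even. -/
theorem exists_faceTwoColoring_of_euler {D : Type} [Fintype D] {σ : Perm D} {α : D → D}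
    (hα : Function.Involutive α) (hα_ne : ∀ d, α d ≠ d)
    (hconn : ∀ d e, Relation.EqvGen (fun a c => α a = c ∨ σ a = c) d e)
    (heuler : Fintype.card D / 2 + 2 ≤ orbCount σ + orbCount (σ ∘ α))
    {c : D → ZMod 2} (hc : ∀ d, c (σ d) = c d + 1) :
    ∃ f ∈ invariantFunctions (ZMod 2) (σ ∘ α), ∀ d, f (α d) = f d + 1 := by
  suffices hone : (1 : D → ZMod 2) ∈ (invariantFunctions (ZMod 2) (σ ∘ α)).map (edgeSum α) by
    obtain ⟨f, hf, hsum⟩ := hone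
    refine ⟨f, hf, fun d => ?_⟩
    have hd : f d + f (α d) = 1 := congrFun hsum d
    rw [← hd, ← add_assoc, CharTwo.add_self_eq_zero, zero_add]
  refine mem_of_forall_dotProduct_eq_zero
    (N := invariantFunctions (ZMod 2) σ ⊔ invariantFunctions (ZMod 2) α) ?_ ?_ ?_
  · rintro _ ⟨f, hf, rfl⟩ _ hn
    obtain ⟨u, hu, w, hw, rfl⟩ := Submodule.mem_sup.1 hn
    rw [add_dotProduct, dotProduct_edgeSum_eq_zero_of_mem_invariantFunctions_comp hα hu hf,
      dotProduct_edgeSum_eq_zero_of_mem_invariantFunctions hα hw, add_zero]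
  · exact card_le_finrank_map_edgeSum_add_finrank_sup hα hconn heuler
  · rintro _ hn
    obtain ⟨u, hu, w, hw, rfl⟩ := Submodule.mem_sup.1 hn
    rw [add_dotProduct, dotProduct_one_eq_zero_of_alternating hu hc,
      dotProduct_one_eq_zero_of_involutive hα hα_ne hw, add_zero]

end PlanarMap

end InvariantFunctions

namespace LinkoidUniverse

open Equiv Equiv.Perm

variable {U : LinkoidUniverse}

theorem vertexOf_eq_vertexOf_iff {d e : U.D} : U.vertexOf d = U.vertexOf e ↔ U.σ.SameCycle d e :=
  quot_mk_eq_iff_sameCycle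

theorem sameCycle_of_faceOf_eq {d e : U.D} (h : U.faceOf d = U.faceOf e) :
    (U.σ * U.α_invol.toPerm).SameCycle d e :=
  quot_mk_eq_iff_sameCycle.1 h

theorem σ_apply_eq_self_iff {d : U.D} : U.σ d = d ↔ d = U.tail ∨ d = U.head :=
  ⟨U.endpoints_only d, fun h => h.elim (· ▸ U.σ_tail) (· ▸ U.σ_head)⟩

theorem σ_symm_apply_ne {d : U.D} (hd : U.σ d ≠ d) : U.σ (U.σ.symm d) ≠ U.σ.symm d := fun h =>
  hd (by rwa [apply_symm_apply, eq_symm_apply] at h)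

theorem col_σ_symm {d : U.D} (hd : U.σ d ≠ d) : U.col (U.σ.symm d) = !U.col d := by
  have h := U.col_alt _ (σ_symm_apply_ne hd)
  rw [apply_symm_apply] at h
  rw [h, Bool.not_not]

theorem ConstOnCycles.symm_apply {b : U.D → Bool} (hb : U.ConstOnCycles b) (d : U.D) :
    b (U.σ.symm d) = b d := by
  rw [← hb, apply_symm_apply]

theorem ConstOnCycles.trans_apply {b b' : U.D → Bool} (hb : U.ConstOnCycles b) (d : U.D) :
    b (U.trans b' d) = b d := by
  rw [trans]
  split_ifs
  exacts [hb d, hb.symm_apply d]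

theorem σ_pow_four_apply (d : U.D) : (U.σ ^ 4) d = d := by
  by_cases hd : U.σ d = d
  · exact pow_apply_eq_self_of_apply_eq_self hd 4
  · exact (U.deg4 d hd).1

variable (U) in
/-- The rotation of the closed map obtained from `U` by gluing its two endpoints into one vertex of
degree two. For a knot-type universe the closed map is again planar, and all its vertices have even
degree. -/
def closedRotation : Perm U.D := swap U.tail U.head * U.σ

theorem closedRotation_tail : U.closedRotation U.tail = U.head := by
  rw [closedRotation, mul_apply, U.σ_tail, swap_apply_left]

theorem closedRotation_head : U.closedRotation U.head = U.tail := by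
  rw [closedRotation, mul_apply, U.σ_head, swap_apply_right]

theorem closedRotation_of_ne {d : U.D} (hd : U.σ d ≠ d) : U.closedRotation d = U.σ d := by
  have hσd : ¬ (U.σ d = U.tail ∨ U.σ d = U.head) := by
    rwa [← σ_apply_eq_self_iff, U.σ.injective.eq_iff]
  rw [closedRotation, mul_apply, swap_apply_of_ne_of_ne (not_or.1 hσd).1 (not_or.1 hσd).2]

theorem closedRotation_conn (d e : U.D) :
    Relation.EqvGen (fun a c => U.α a = c ∨ U.closedRotation a = c) d e := by
  refine (Relation.EqvGen.is_equivalence _).eqvGen_iff.1 ((U.conn d e).mono fun a c hac => ?_)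
  rcases hac with hα | hσ
  · exact .rel _ _ (.inl hα)
  by_cases ha : U.σ a = a
  · exact hσ ▸ ha.symm ▸ .refl a
  · exact .rel _ _ (.inr ((closedRotation_of_ne ha).trans hσ))

theorem closedRotation_euler (hknot : U.faceOf U.tail = U.faceOf U.head) :
    Fintype.card U.D / 2 + 2 ≤
      orbCount U.closedRotation + orbCount (U.closedRotation ∘ U.α) := by
  have hvertices : orbCount U.σ ≤ orbCount U.closedRotation + 1 :=
    orbCount_le_orbCount_swap_mul_add_one U.σ U.tail U.head
  have hfaces : orbCount (U.σ ∘ U.α) < orbCount (U.closedRotation ∘ U.α) :=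
    orbCount_lt_orbCount_swap_mul U.tail_ne_head (sameCycle_of_faceOf_eq hknot)
  have heuler := U.euler
  omega

theorem exists_closedRotation_alternating :
    ∃ c : U.D → ZMod 2, ∀ d, c (U.closedRotation d) = c d + 1 := by
  refine ⟨fun d => if d = U.tail then 0 else if d = U.head then 1 else if U.col d then 1 else 0,
    fun d => ?_⟩
  have hne := U.tail_ne_head
  by_cases htail : d = U.tail
  · simp [htail, closedRotation_tail, hne.symm]
  by_cases hhead : d = U.head
  · simp [hhead, closedRotation_head, hne.symm, CharTwo.add_self_eq_zero]
  have hd : U.σ d ≠ d := fun h => (U.endpoints_only d h).elim htail hhead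
  have hσd : U.σ (U.σ d) ≠ U.σ d := U.σ.injective.ne hd
  rw [Ne, σ_apply_eq_self_iff, not_or] at hσd
  simp only [closedRotation_of_ne hd, hσd, htail, hhead, U.col_alt d hd]
  cases U.col d <;> decide

/-- An orientation of the edges of `U` that leaves the tail, enters the head, and alternates
between outgoing and incoming around every crossing, so that both smoothings of every crossing
respect it. The dart `d` points away from its vertex when `out d` holds. -/
structure SourceSinkOrientation (U : LinkoidUniverse) where
  out : U.D → Bool
  out_α : ∀ d, out (U.α d) = !out d
  out_closedRotation : ∀ d, out (U.closedRotation d) = !out d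
  out_tail : out U.tail = true

/- The faces of the closed map have a checkerboard colouring; a dart is outgoing when the face
through it has the colour of the face through the tail. -/
theorem nonempty_sourceSinkOrientation (hknot : U.faceOf U.tail = U.faceOf U.head) :
    Nonempty U.SourceSinkOrientation := by
  obtain ⟨c, hc⟩ := exists_closedRotation_alternating
  obtain ⟨f, hface, hα⟩ := exists_faceTwoColoring_of_euler U.α_invol U.α_ne closedRotation_conn
    (closedRotation_euler hknot) hc
  have hρ : ∀ d, f (U.closedRotation d) = f d + 1 := fun d => by
    rw [← hα, ← hface (U.α d), Function.comp_apply, U.α_invol]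
  have hflip : ∀ x y : ZMod 2, decide (x + 1 = y) = !decide (x = y) := by decide
  exact ⟨fun d => decide (f d = f U.tail), fun d => by rw [hα, hflip],
    fun d => by rw [hρ, hflip], decide_eq_true rfl⟩

variable (U) in
/-- The darts `d` and `e` lie on the same component of the smoothing `b`. -/
abbrev SameComponent (b : U.D → Bool) (d e : U.D) : Prop :=
  Relation.EqvGen (fun a c => U.α a = c ∨ U.trans b a = c) d e

theorem trans_of_fixed (b : U.D → Bool) {e : U.D} (he : U.σ e = e) : U.trans b e = e := by
  rw [trans, (symm_apply_eq U.σ).2 he.symm, he, ite_self]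

theorem trans_involutive {b : U.D → Bool} (hb : U.ConstOnCycles b) :
    Function.Involutive (U.trans b) := by
  intro e
  by_cases he : U.σ e = e
  · rw [trans_of_fixed b he, trans_of_fixed b he]
  by_cases hcol : U.col e = b e
  · simp [trans, hcol, U.col_alt e he, hb e]
  · have hnot : U.col e = !b e := Bool.eq_not_of_ne hcol
    simp [trans, hnot, col_σ_symm he, hb.symm_apply e]

/-- The strand transitions of the smoothing `b` after gluing the two endpoints: the transition at
the glued vertex joins the tail to the head, so that an arc becomes a closed curve. -/
def closedTrans {b : U.D → Bool} (hb : U.ConstOnCycles b) : Perm U.D :=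
  swap U.tail U.head * (trans_involutive hb).toPerm

section ClosedTrans

variable {b : U.D → Bool} (hb : U.ConstOnCycles b)

theorem closedTrans_apply (d : U.D) :
    closedTrans hb d = swap U.tail U.head (U.trans b d) := rfl

theorem closedTrans_tail : closedTrans hb U.tail = U.head := by
  rw [closedTrans_apply, trans_of_fixed b U.σ_tail, swap_apply_left]

theorem closedTrans_head : closedTrans hb U.head = U.tail := by
  rw [closedTrans_apply, trans_of_fixed b U.σ_head, swap_apply_right]

theorem closedTrans_of_ne {d : U.D} (hd : U.σ d ≠ d) : closedTrans hb d = U.trans b d := by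
  have hinv := trans_involutive hb
  rw [Ne, σ_apply_eq_self_iff, not_or] at hd
  rw [closedTrans_apply, swap_apply_of_ne_of_ne]
  · rw [← trans_of_fixed b U.σ_tail, hinv.injective.ne_iff]
    exact hd.1
  · rw [← trans_of_fixed b U.σ_head, hinv.injective.ne_iff]
    exact hd.2

theorem closedTrans_involutive : Function.Involutive (closedTrans hb) := by
  intro d
  by_cases hd : U.σ d = d
  · rcases σ_apply_eq_self_iff.1 hd with rfl | rfl
    · rw [closedTrans_tail, closedTrans_head]
    · rw [closedTrans_head, closedTrans_tail]
  · have hinv := trans_involutive hb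
    have hne : U.σ (U.trans b d) ≠ U.trans b d := fun h => hd <| by
      have hfix := (hinv d).symm.trans (trans_of_fixed b h)
      rwa [← hfix] at h
    rw [closedTrans_of_ne hb hd, closedTrans_of_ne hb hne, hinv d]

theorem closedTrans_eq_ite {b' : U.D → Bool} (hb' : U.ConstOnCycles b') (d : U.D) :
    closedTrans hb' d = if b (closedTrans hb d) = b' (closedTrans hb d) then closedTrans hb d
      else (U.σ ^ 2) (closedTrans hb d) := by
  by_cases hd : U.σ d = d
  · rcases σ_apply_eq_self_iff.1 hd with rfl | rfl
    · simp [closedTrans_tail, sq, U.σ_head]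
    · simp [closedTrans_head, sq, U.σ_tail]
  have hhalf : (U.σ ^ 2) (U.σ d) = U.σ.symm d := (eq_symm_apply U.σ).2 (σ_pow_four_apply d)
  rw [closedTrans_of_ne hb hd, closedTrans_of_ne hb' hd, hb.trans_apply, hb'.trans_apply]
  by_cases h : b d = b' d
  · simp only [trans, h, if_true]
  · rw [if_neg h]
    by_cases hcol : U.col d = b d
    · rw [trans, trans, if_pos hcol, if_neg (hcol ▸ h), hhalf]
    · have hcol' : U.col d = b' d := by
        rw [Bool.eq_not_of_ne hcol, Bool.eq_not_of_ne (Ne.symm h)]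
      rw [trans, trans, if_neg hcol, if_pos hcol', sq, mul_apply, apply_symm_apply]

end ClosedTrans

theorem vertexOf_σ (d : U.D) : U.vertexOf (U.σ d) = U.vertexOf d :=
  vertexOf_eq_vertexOf_iff.2 (sameCycle_apply_left.2 .rfl)

theorem vertexOf_mem_diffSet {b b' : U.D → Bool} (hb : U.ConstOnCycles b)
    (hb' : U.ConstOnCycles b') {d : U.D} :
    U.vertexOf d ∈ U.diffSet b b' ↔ b d ≠ b' d := by
  refine ⟨fun ⟨e, hed, he⟩ => ?_, fun h => ⟨d, rfl, h⟩⟩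
  exact pred_of_sameCycle (P := fun z => b z ≠ b' z) (fun z hz => by rwa [hb z, hb' z])
    (vertexOf_eq_vertexOf_iff.1 hed) he

namespace SourceSinkOrientation

variable (o : U.SourceSinkOrientation) {b : U.D → Bool} (hb : U.ConstOnCycles b)

theorem out_head : o.out U.head = false := by
  rw [← closedRotation_tail, o.out_closedRotation, o.out_tail, Bool.not_true]

theorem out_σ {d : U.D} (hd : U.σ d ≠ d) : o.out (U.σ d) = !o.out d := by
  rw [← closedRotation_of_ne hd, o.out_closedRotation]

theorem out_closedTrans (d : U.D) : o.out (closedTrans hb d) = !o.out d := by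
  by_cases hd : U.σ d = d
  · rcases σ_apply_eq_self_iff.1 hd with rfl | rfl
    · rw [closedTrans_tail, o.out_head, o.out_tail, Bool.not_true]
    · rw [closedTrans_head, o.out_head, o.out_tail, Bool.not_false]
  rw [closedTrans_of_ne hb hd, trans]
  split_ifs
  · exact o.out_σ hd
  · have hout := o.out_σ (σ_symm_apply_ne hd)
    rw [apply_symm_apply] at hout
    rw [hout, Bool.not_not]

/-- The darts that point away from their vertex; each edge has exactly one. -/
abbrev OutDart : Type := {d // o.out d}

theorem exists_outDart_vertexOf_eq {d : U.D} (hd : U.σ d ≠ d) :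
    ∃ x : o.OutDart, U.vertexOf x.1 = U.vertexOf d := by
  cases h : o.out d
  · exact ⟨⟨U.σ d, by rw [o.out_σ hd, h, Bool.not_false]⟩, vertexOf_σ d⟩
  · exact ⟨⟨d, h⟩, rfl⟩

/-- The permutation sending an outgoing dart to the next one along the curves of the smoothing `b`,
where the arc through the endpoints is closed up. Its cycles are the components of the smoothing. -/
def nextDart : Perm o.OutDart :=
  (closedTrans hb * U.α_invol.toPerm).subtypePerm fun d => by
    simp [o.out_closedTrans hb, o.out_α]

theorem sameCycle_nextDart_of_sameComponent {x y : o.OutDart}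
    (h : U.SameComponent b x.1 y.1) :
    (o.nextDart hb).SameCycle x y := by
  have hclosed : Relation.EqvGen (fun a c => U.α a = c ∨ closedTrans hb a = c) x.1 y.1 := by
    refine (Relation.EqvGen.is_equivalence _).eqvGen_iff.1 (h.mono fun a c hac => ?_)
    rcases hac with hα | ht
    · exact .rel _ _ (.inl hα)
    by_cases ha : U.σ a = a
    · exact ht ▸ (trans_of_fixed b ha).symm ▸ .refl a
    · exact .rel _ _ (.inr ((closedTrans_of_ne hb ha).trans ht))
  exact sameCycle_subtypePerm.2 (sameCycle_mul_of_eqvGen U.α_invol (closedTrans_involutive hb)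
    o.out_α (o.out_closedTrans hb) hclosed x.2 y.2)

include o hb in
theorem sameComponent_tail_head : U.SameComponent b U.tail U.head := by
  let openPerm : Perm U.D := (trans_involutive hb).toPerm * U.α_invol.toPerm
  have hclosed : ¬ (swap U.tail U.head * openPerm).SameCycle U.tail U.head := fun h => by
    have hhead : o.out U.head = true := pred_of_sameCycle (P := fun z => o.out z = true)
      (fun z hz => (o.out_closedTrans hb (U.α z)).trans (by simp [o.out_α, hz])) h o.out_tail
    simp [o.out_head] at hhead
  have hopen : openPerm.SameCycle U.tail U.head := by
    rwa [sameCycle_swap_mul_iff U.tail_ne_head, not_not] at hclosed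
  exact pred_of_sameCycle (P := U.SameComponent b U.tail)
    (fun z hz => (hz.trans _ _ _ (.rel _ _ (.inl rfl))).trans _ _ _ (.rel _ _ (.inr rfl)))
    hopen (.refl _)

include o in
theorem sameComponent_closedTrans (d : U.D) : U.SameComponent b d (closedTrans hb d) := by
  by_cases hd : U.σ d = d
  · rcases σ_apply_eq_self_iff.1 hd with rfl | rfl
    · rw [closedTrans_tail]
      exact o.sameComponent_tail_head hb
    · rw [closedTrans_head]
      exact (o.sameComponent_tail_head hb).symm
  · exact .rel _ _ (.inr (closedTrans_of_ne hb hd).symm)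

theorem smoothedConnected_iff : U.SmoothedConnected b ↔ (o.nextDart hb).IsCycleOn Set.univ := by
  rw [isCycleOn_univ_iff]
  refine ⟨fun h x y => o.sameCycle_nextDart_of_sameComponent hb (h x y), fun h => ?_⟩
  have hout : ∀ d, ∃ x : o.OutDart, U.SameComponent b d x.1 := fun d => by
    cases hd : o.out d
    · exact ⟨⟨U.α d, by simp [o.out_α, hd]⟩, .rel _ _ (.inl rfl)⟩
    · exact ⟨⟨d, hd⟩, .refl _⟩
  intro d e
  obtain ⟨x, hx⟩ := hout d
  obtain ⟨y, hy⟩ := hout e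
  refine (hx.trans _ _ _ ?_).trans _ _ _ hy.symm
  exact pred_of_sameCycle (P := U.SameComponent b x.1)
    (fun z hz => (hz.trans _ _ _ (.rel _ _ (.inl rfl))).trans _ _ _
      (o.sameComponent_closedTrans hb _))
    (sameCycle_subtypePerm.1 (h x y)) (.refl _)

/-- The other outgoing dart at the crossing of an outgoing dart, as a half turn; the dart at an
endpoint is its own opposite. -/
def opposite (x : o.OutDart) : o.OutDart :=
  ⟨(U.σ ^ 2) x.1, by
    by_cases hx : U.σ x.1 = x.1
    · simp [sq, hx, x.2]
    · rw [sq, mul_apply, o.out_σ (U.σ.injective.ne hx), o.out_σ hx, x.2, Bool.not_true,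
        Bool.not_false]⟩

theorem opposite_involutive : Function.Involutive o.opposite := fun x =>
  Subtype.ext (σ_pow_four_apply x.1)

theorem vertexOf_opposite (x : o.OutDart) : U.vertexOf (o.opposite x).1 = U.vertexOf x.1 :=
  vertexOf_eq_vertexOf_iff.2 (sameCycle_pow_left.2 .rfl)

theorem opposite_ne {x : o.OutDart} (hx : U.σ x.1 ≠ x.1) : o.opposite x ≠ x := fun h =>
  (U.deg4 x.1 hx).2 (congrArg Subtype.val h)

theorem vertexOf_eq_iff_eq_or_eq_opposite {x y : o.OutDart} :
    U.vertexOf x.1 = U.vertexOf y.1 ↔ x = y ∨ x = o.opposite y := by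
  refine ⟨fun h => ?_, fun h => ?_⟩
  swap
  · rcases h with rfl | rfl
    exacts [rfl, o.vertexOf_opposite y]
  let P : U.D → Prop := fun d => d = y.1 ∨ d = (o.opposite y).1
  have hstep : ∀ d, P d → P (U.σ (U.σ d)) := by
    rintro d (rfl | rfl)
    exacts [.inr rfl, .inl (σ_pow_four_apply y.1)]
  have hx : P x.1 ∨ P (U.σ x.1) := pred_of_sameCycle (P := fun d => P d ∨ P (U.σ d))
    (fun d hd => hd.elim (fun h => .inr (hstep d h)) .inl)
    (vertexOf_eq_vertexOf_iff.1 h.symm) (.inl (.inl rfl))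
  have hxP : P x.1 := by
    refine hx.elim id fun hσx => ?_
    by_cases hfix : U.σ x.1 = x.1
    · rwa [hfix] at hσx
    have hin : o.out (U.σ x.1) = false := by rw [o.out_σ hfix, x.2, Bool.not_true]
    rcases hσx with h | h
    · exact absurd (hin.symm.trans (h ▸ y.2)) Bool.false_ne_true
    · exact absurd (hin.symm.trans (h ▸ (o.opposite y).2)) Bool.false_ne_true
  exact hxP.imp Subtype.ext Subtype.ext

open Classical in
/-- The permutation of outgoing darts exchanging opposite darts at the vertices in `S`. -/
noncomputable def oppositeOn (S : Set U.Vertex) : Perm o.OutDart :=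
  Function.Involutive.toPerm (fun x => if U.vertexOf x.1 ∈ S then o.opposite x else x) fun x => by
    by_cases hx : U.vertexOf x.1 ∈ S <;>
      simp [hx, o.vertexOf_opposite, o.opposite_involutive x]

theorem oppositeOn_of_mem {S : Set U.Vertex} {x : o.OutDart} (hx : U.vertexOf x.1 ∈ S) :
    o.oppositeOn S x = o.opposite x := if_pos hx

theorem oppositeOn_of_notMem {S : Set U.Vertex} {x : o.OutDart} (hx : U.vertexOf x.1 ∉ S) :
    o.oppositeOn S x = x := if_neg hx

theorem oppositeOn_involutive (S : Set U.Vertex) : Function.Involutive (o.oppositeOn S) :=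
  Function.Involutive.toPerm_involutive _

theorem oppositeOn_singleton (x : o.OutDart) :
    o.oppositeOn {U.vertexOf x.1} = swap x (o.opposite x) := by
  ext1 y
  by_cases hy : U.vertexOf y.1 = U.vertexOf x.1
  · rw [o.oppositeOn_of_mem (S := {U.vertexOf x.1}) hy]
    rw [o.vertexOf_eq_iff_eq_or_eq_opposite] at hy
    rcases hy with rfl | rfl
    · rw [swap_apply_left]
    · rw [swap_apply_right, o.opposite_involutive]
  · rw [o.oppositeOn_of_notMem (S := {U.vertexOf x.1}) hy]
    rw [o.vertexOf_eq_iff_eq_or_eq_opposite] at hy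
    rw [swap_apply_of_ne_of_ne (not_or.1 hy).1 (not_or.1 hy).2]

theorem oppositeOn_insert {v : U.Vertex} {S : Set U.Vertex} (hv : v ∉ S) :
    o.oppositeOn (insert v S) = o.oppositeOn {v} * o.oppositeOn S := by
  ext1 x
  rw [mul_apply]
  by_cases hx : U.vertexOf x.1 ∈ S
  · have hne : U.vertexOf (o.opposite x).1 ∉ ({v} : Set U.Vertex) := by
      rw [o.vertexOf_opposite]
      rintro rfl
      exact hv hx
    rw [o.oppositeOn_of_mem hx, o.oppositeOn_of_notMem hne, o.oppositeOn_of_mem (.inr hx)]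
  · rw [o.oppositeOn_of_notMem hx]
    by_cases hxv : U.vertexOf x.1 = v
    · rw [o.oppositeOn_of_mem (S := {v}) hxv, o.oppositeOn_of_mem (.inl hxv)]
    · rw [o.oppositeOn_of_notMem (S := {v}) hxv, o.oppositeOn_of_notMem (not_or.2 ⟨hxv, hx⟩)]

theorem nextDart_eq_oppositeOn_mul {b' : U.D → Bool} (hb' : U.ConstOnCycles b') :
    o.nextDart hb' = o.oppositeOn (U.diffSet b b') * o.nextDart hb := by
  ext1 x
  have hval := closedTrans_eq_ite hb hb' (U.α x.1)
  apply Subtype.ext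
  rw [mul_apply]
  change closedTrans hb' (U.α x.1) = _
  by_cases h : b (o.nextDart hb x).1 = b' (o.nextDart hb x).1
  · rw [o.oppositeOn_of_notMem (mt (vertexOf_mem_diffSet hb hb').1 (not_not.2 h))]
    exact hval.trans (if_pos h)
  · rw [o.oppositeOn_of_mem ((vertexOf_mem_diffSet hb hb').2 h)]
    exact hval.trans (if_neg h)

end SourceSinkOrientation

section Resmoothing

variable {b b' : U.D → Bool}

open Classical in
/-- The smoothing obtained from `b` by resmoothing the sites in `S`. -/
noncomputable def resmooth (b : U.D → Bool) (S : Set U.Vertex) : U.D → Bool := fun d =>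
  if U.vertexOf d ∈ S then !b d else b d

theorem ConstOnCycles.resmooth (hb : U.ConstOnCycles b) (S : Set U.Vertex) :
    U.ConstOnCycles (resmooth b S) := fun d => by
  rw [LinkoidUniverse.resmooth, LinkoidUniverse.resmooth, vertexOf_σ, hb d]

theorem diffSet_resmooth_right (hb : U.ConstOnCycles b) (S : Set U.Vertex) :
    U.diffSet b (resmooth b S) = S := by
  ext ⟨d⟩
  refine (vertexOf_mem_diffSet hb (hb.resmooth S)).trans ?_
  change _ ↔ U.vertexOf d ∈ S
  by_cases hd : U.vertexOf d ∈ S <;> simp [resmooth, hd]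

theorem diffSet_resmooth_left (hb : U.ConstOnCycles b) (hb' : U.ConstOnCycles b')
    {S : Set U.Vertex} (hS : S ⊆ U.diffSet b b') :
    U.diffSet (resmooth b S) b' = U.diffSet b b' \ S := by
  ext ⟨d⟩
  refine (vertexOf_mem_diffSet (hb.resmooth S) hb').trans ?_
  change _ ↔ U.vertexOf d ∈ _ ∧ U.vertexOf d ∉ S
  rw [vertexOf_mem_diffSet hb hb']
  by_cases hd : U.vertexOf d ∈ S
  · simp [resmooth, hd, Bool.eq_not_of_ne ((vertexOf_mem_diffSet hb hb').1 (hS hd))]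
  · simp [resmooth, hd]

end Resmoothing

namespace Trail

theorem eq_of_diffSet_eq_empty {T1 T2 : U.Trail} (h : U.diffSet T1.b T2.b = ∅) : T1 = T2 := by
  obtain ⟨b, _, _, _⟩ := T1
  obtain ⟨b', _, _, _⟩ := T2
  have hb : b = b' := funext fun d => by_contra fun hd => h.le ⟨d, rfl, hd⟩
  subst hb
  rfl

theorem σ_apply_ne_of_mem_diffSet (T1 T2 : U.Trail) {d : U.D}
    (hd : U.vertexOf d ∈ U.diffSet T1.b T2.b) : U.σ d ≠ d := fun hfix =>
  (vertexOf_mem_diffSet T1.const T2.const).1 hd ((T1.norm d hfix).trans (T2.norm d hfix).symm)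

theorem resmooth_norm (T1 T2 : U.Trail) {S : Set U.Vertex} (hS : S ⊆ U.diffSet T1.b T2.b)
    (d : U.D) (hd : U.σ d = d) : resmooth T1.b S d = false := by
  have hdS : U.vertexOf d ∉ S := fun h => σ_apply_ne_of_mem_diffSet T1 T2 (hS h) hd
  rw [resmooth, if_neg hdS, T1.norm d hd]

theorem exists_smoothedConnected_resmooth_pair (o : U.SourceSinkOrientation) (T1 T2 : U.Trail)
    (hne : (U.diffSet T1.b T2.b).Nonempty) :
    ∃ v ∈ U.diffSet T1.b T2.b, ∃ w ∈ U.diffSet T1.b T2.b, v ≠ w ∧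
      U.SmoothedConnected (resmooth T1.b {v, w}) := by
  obtain ⟨p, hp⟩ : ∃ p : o.OutDart, U.vertexOf p.1 ∈ U.diffSet T1.b T2.b := by
    obtain ⟨⟨d⟩, hd⟩ := hne
    obtain ⟨p, hp⟩ := o.exists_outDart_vertexOf_eq (σ_apply_ne_of_mem_diffSet T1 T2 hd)
    exact ⟨p, hp.symm ▸ hd⟩
  have hpp : o.oppositeOn (U.diffSet T1.b T2.b) p ≠ p := by
    rw [o.oppositeOn_of_mem hp]
    exact o.opposite_ne (σ_apply_ne_of_mem_diffSet T1 T2 hp)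
  set S := U.diffSet T1.b T2.b with hS
  have hone := (o.smoothedConnected_iff T1.const).1 T1.conn
  have htwo := (o.smoothedConnected_iff T2.const).1 T2.conn
  rw [o.nextDart_eq_oppositeOn_mul T1.const T2.const] at htwo
  obtain ⟨q, hq, hqp, hqp', hcycle⟩ :=
    exists_isCycleOn_univ_swap_mul_swap_mul hone htwo (o.oppositeOn_involutive S) hpp
  have hqS : U.vertexOf q.1 ∈ S := by_contra fun h => hq (o.oppositeOn_of_notMem h)
  rw [← hS, o.oppositeOn_of_mem hp] at hqp' hcycle
  rw [o.oppositeOn_of_mem hqS] at hcycle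
  have hvw : U.vertexOf q.1 ≠ U.vertexOf p.1 := fun h =>
    (o.vertexOf_eq_iff_eq_or_eq_opposite.1 h).elim hqp hqp'
  refine ⟨_, hqS, _, hp, hvw, (o.smoothedConnected_iff (T1.const.resmooth _)).2 ?_⟩
  rwa [o.nextDart_eq_oppositeOn_mul T1.const, diffSet_resmooth_right T1.const,
    o.oppositeOn_insert (S := {U.vertexOf p.1}) hvw, o.oppositeOn_singleton,
    o.oppositeOn_singleton, mul_assoc]

theorem exists_diffSet_eq_pair (o : U.SourceSinkOrientation) (T1 T2 : U.Trail)
    (hne : (U.diffSet T1.b T2.b).Nonempty) :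
    ∃ v ∈ U.diffSet T1.b T2.b, ∃ w ∈ U.diffSet T1.b T2.b, v ≠ w ∧ ∃ T3 : U.Trail,
      U.diffSet T1.b T3.b = {v, w} ∧ U.diffSet T3.b T2.b = U.diffSet T1.b T2.b \ {v, w} := by
  obtain ⟨v, hv, w, hw, hvw, hconn⟩ := exists_smoothedConnected_resmooth_pair o T1 T2 hne
  have hpair : {v, w} ⊆ U.diffSet T1.b T2.b := Set.pair_subset hv hw
  exact ⟨v, hv, w, hw, hvw,
    ⟨resmooth T1.b {v, w}, T1.const.resmooth _, resmooth_norm T1 T2 hpair, hconn⟩,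
    diffSet_resmooth_right T1.const _, diffSet_resmooth_left T1.const T2.const hpair⟩

end Trail

instance instFiniteVertex : Finite U.Vertex := Quot.finite _

end LinkoidUniverse

/-- any two trails of a knot-type 1-linkoid universe (both endpoints in
the same face) are related by a finite sequence of double exchanges: each step
resmooths exactly two smoothing sites and yields a trail. -/
theorem trails_related_by_double_exchanges (U : LinkoidUniverse)
    (hknot : U.faceOf U.tail = U.faceOf U.head) (T1 T2 : U.Trail) :
    Relation.ReflTransGen
      (fun A B : U.Trail => (U.diffSet A.b B.b).ncard = 2) T1 T2 := by
  obtain ⟨o⟩ := LinkoidUniverse.nonempty_sourceSinkOrientation hknot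
  induction hn : (U.diffSet T1.b T2.b).ncard using Nat.strong_induction_on generalizing T1 with
  | _ n ih =>
    rcases (U.diffSet T1.b T2.b).eq_empty_or_nonempty with hempty | hne
    · rw [LinkoidUniverse.Trail.eq_of_diffSet_eq_empty hempty]
    · obtain ⟨v, hv, w, -, hvw, T3, h13, h32⟩ :=
        LinkoidUniverse.Trail.exists_diffSet_eq_pair o T1 T2 hne
      have hlt : (U.diffSet T3.b T2.b).ncard < n := by
        rw [h32, ← hn]
        exact Set.ncard_lt_ncard (Set.sdiff_ssubset_left_iff.2 ⟨v, hv, .inl rfl⟩)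
      exact .head (h13 ▸ Set.ncard_pair hvw) (ih _ hlt T3 rfl)
end

section
/- Let T1 and T2 be two trails of any 1-linkoid universe. Then T2 can be obtained from T1 by a finite sequence of moves, each of which is either a single exchange (resmoothing one site, when this preserves connectivity) or a double exchange (resmoothing two sites), with every intermediate object being a trail, and each move strictly decreasing the number of sites at which the current trail differs from T2. -/
/-!
Label darts by elements of `ZMod 2`. A smoothing is connected exactly when every labelling constant
along its strands is constant. Such a labelling takes equal values at the two endpoints, by parity.
If smoothings `s` and `t` differ only at the vertex of the dart `e`, and `f`, `g` are labellings
constant along the strands of `s` and `t`, shift `f` to vanish at the endpoints. Then `f * g` sums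
to zero over all darts (pair them along edges) and over the darts away from that vertex (pair them
along strands), hence over the four darts at the vertex. That last sum is the product of the jumps
of `f` and `g` across the vertex, so one of the jumps vanishes.

Given trails `A` and `T` differing at `d`, resmooth `A` at `d`. If this disconnects the arc, a
nonconstant labelling `χ` has nonzero jump at `d` (as `A` is connected) and at some other site `e`
where `A` and `T` differ (as `T` is connected). After resmoothing also at `e`, any labelling `g`
has zero jump at `e`; then `g + jump d g • χ` has zero jump at `d`, so it is constant, and comparing
jumps at `e` gives `jump d g = 0`. This is the symmetric exchange axiom of delta-matroids for
trails.
-/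

open Function

section Preliminaries

theorem eqvGen_iff_forall_labelling_eq {D R : Type*} [Nontrivial R] {r : D → D → Prop} {x y : D} :
    Relation.EqvGen r x y ↔ ∀ f : D → R, (∀ a b, r a b → f a = f b) → f x = f y := by
  refine ⟨fun h f hf => congrArg (Quot.lift f hf) (Quot.eqvGen_sound h), fun h => ?_⟩
  classical
  obtain ⟨p, q, hpq⟩ := exists_pair_ne R
  let f : D → R := fun z => if Quot.mk r z = Quot.mk r x then p else q
  have hfy : p = f y := by
    simpa [f] using h f fun a b hab => by simp only [f, Quot.sound hab]
  refine Quot.eqvGen_exact (by_contra fun hne => hpq ?_)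
  rw [hfy]
  exact if_neg (Ne.symm hne)

theorem sum_eq_zero_of_involutive {D R : Type*} [Semiring R] [CharP R 2] {F : Finset D} {h : D → D}
    {f : D → R} (hh : Involutive h) (hF : ∀ x ∈ F, h x ∈ F) (hf : ∀ x ∈ F, f (h x) = f x)
    (hfix : ∀ x ∈ F, h x = x → f x = 0) : ∑ x ∈ F, f x = 0 :=
  Finset.sum_involution (fun x _ => h x)
    (fun x hx => by rw [hf x hx, CharTwo.add_self_eq_zero])
    (fun x hx hne heq => hne (hfix x hx heq)) hF fun x _ => hh x

end Preliminaries

/-- A graph with two endpoints of degree one and all other vertices of degree four, given by its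
darts `D` and vertices `V`, where two of the three pairings of the darts at each vertex are declared
to be its smoothings. This is the part of a linkoid universe on which trails depend; it carries no
embedding. The two smoothings at a vertex are labelled by `Bool` and are encoded as commuting
involutions of the darts fixing the endpoints, so that the darts at a vertex form an orbit of the
Klein four-group they generate. -/
structure TransitionSystem (D V : Type*) where
  edge : D → D
  vertex : D → V
  smooth : Bool → D → D
  tail : D
  head : D
  edge_involutive : Involutive edge
  edge_ne : ∀ x, edge x ≠ x
  smooth_involutive : ∀ i, Involutive (smooth i)
  smooth_comm : ∀ x, smooth true (smooth false x) = smooth false (smooth true x)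
  vertex_eq_iff : ∀ x y, vertex y = vertex x ↔
    y = x ∨ y = smooth true x ∨ y = smooth false x ∨ y = smooth true (smooth false x)
  smooth_tail : ∀ i, smooth i tail = tail
  smooth_head : ∀ i, smooth i head = head
  smooth_ne : ∀ i x, x ≠ tail → x ≠ head → smooth i x ≠ x
  smooth_true_ne_smooth_false : ∀ x, x ≠ tail → x ≠ head → smooth true x ≠ smooth false x

namespace TransitionSystem

variable {D V : Type*} (S : TransitionSystem D V)

/-- The dart facing `x` across its vertex: the one joined to `x` by neither smoothing. -/
def opposite (x : D) : D := S.smooth true (S.smooth false x)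

/-- The dart joined to `x` at its vertex by the smoothing choice `s`. -/
def next (s : V → Bool) (x : D) : D := S.smooth (s (S.vertex x)) x

/-- The diagram smoothed according to `s` is connected. -/
def Connected (s : V → Bool) : Prop :=
  ∀ x y, Relation.EqvGen (fun a b => S.edge a = b ∨ S.next s a = b) x y

/-- The space of labellings of the darts by `ZMod 2` that are constant along the strands of the
diagram smoothed according to `s`. -/
def strandLabellings (s : V → Bool) : Submodule (ZMod 2) (D → ZMod 2) where
  carrier := {f | ∀ x, f (S.edge x) = f x ∧ f (S.next s x) = f x}
  zero_mem' _ := ⟨rfl, rfl⟩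
  add_mem' hf hg x := by simp [hf x, hg x]
  smul_mem' c f hf x := by simp [hf x]

/-- The change of a labelling between `x` and the dart facing it. -/
def jump (x : D) : (D → ZMod 2) →ₗ[ZMod 2] ZMod 2 :=
  (LinearMap.proj x : (D → ZMod 2) →ₗ[ZMod 2] ZMod 2) + LinearMap.proj (S.opposite x)

/-- A trail: a smoothing choice with connected result. The choice at an endpoint has no effect and
is normalised to `false`, so that distinct trails differ at a vertex of degree four. -/
@[ext]
structure Trail where
  smoothing : V → Bool
  smoothing_tail : smoothing (S.vertex S.tail) = false
  smoothing_head : smoothing (S.vertex S.head) = false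
  connected : S.Connected smoothing

variable {S}

section Darts

theorem smooth_smooth_not (i : Bool) (x : D) : S.smooth i (S.smooth (!i) x) = S.opposite x := by
  cases i
  · exact (S.smooth_comm x).symm
  · rfl

theorem opposite_smooth (i : Bool) (x : D) :
    S.opposite (S.smooth i x) = S.smooth (!i) x := by
  rw [← smooth_smooth_not (!i), Bool.not_not, S.smooth_involutive]

theorem smooth_opposite (i : Bool) (x : D) : S.smooth i (S.opposite x) = S.smooth (!i) x := by
  rw [← smooth_smooth_not i, S.smooth_involutive]

theorem vertex_eq_iff_smooth (i : Bool) {x y : D} : S.vertex y = S.vertex x ↔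
    y = x ∨ y = S.smooth i x ∨ y = S.smooth (!i) x ∨ y = S.opposite x := by
  rw [S.vertex_eq_iff]
  cases i
  · exact or_congr_right or_left_comm
  · rfl

theorem vertex_smooth (i : Bool) (x : D) : S.vertex (S.smooth i x) = S.vertex x :=
  (vertex_eq_iff_smooth i).2 (.inr (.inl rfl))

theorem smooth_ne_smooth_not (i : Bool) {x : D} (ht : x ≠ S.tail) (hh : x ≠ S.head) :
    S.smooth i x ≠ S.smooth (!i) x := by
  cases i
  · exact (S.smooth_true_ne_smooth_false x ht hh).symm
  · exact S.smooth_true_ne_smooth_false x ht hh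

theorem opposite_ne {x : D} (ht : x ≠ S.tail) (hh : x ≠ S.head) : S.opposite x ≠ x := by
  intro h
  have := congrArg (S.smooth true) h
  rw [smooth_opposite] at this
  exact smooth_ne_smooth_not true ht hh this.symm

theorem vertex_next (s : V → Bool) (x : D) : S.vertex (S.next s x) = S.vertex x :=
  vertex_smooth _ x

theorem next_involutive (s : V → Bool) : Involutive (S.next s) := fun x => by
  rw [next, vertex_next, next, S.smooth_involutive]

theorem next_tail (s : V → Bool) : S.next s S.tail = S.tail := S.smooth_tail _

theorem next_head (s : V → Bool) : S.next s S.head = S.head := S.smooth_head _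

theorem eq_tail_or_eq_head_of_next_eq {s : V → Bool} {x : D} (h : S.next s x = x) :
    x = S.tail ∨ x = S.head := by
  by_contra! hx
  exact S.smooth_ne _ x hx.1 hx.2 h

theorem sum_vertex_fiber {M : Type*} [AddCommMonoid M] [Fintype D] [DecidableEq V] (i : Bool)
    {e : D} (ht : e ≠ S.tail) (hh : e ≠ S.head) (f : D → M) :
    ∑ x with S.vertex x = S.vertex e, f x =
      f e + (f (S.smooth i e) + (f (S.smooth (!i) e) + f (S.opposite e))) := by
  classical
  have hfiber : Finset.univ.filter (fun x => S.vertex x = S.vertex e) =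
      {e, S.smooth i e, S.smooth (!i) e, S.opposite e} := by
    ext x
    simp [vertex_eq_iff_smooth i]
  have hopp (j : Bool) : S.smooth j e ≠ S.opposite e := by
    rw [← smooth_smooth_not j]
    exact (S.smooth_involutive j).injective.ne (S.smooth_ne _ e ht hh).symm
  rw [hfiber, Finset.sum_insert, Finset.sum_insert, Finset.sum_pair (hopp _)]
  · simp [smooth_ne_smooth_not i ht hh, hopp]
  · simp [(S.smooth_ne _ e ht hh).symm, (opposite_ne ht hh).symm]

end Darts

section Labellings

variable {s t : V → Bool} {f g : D → ZMod 2}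

theorem connected_iff :
    S.Connected s ↔ ∀ f ∈ S.strandLabellings s, ∀ x y, f x = f y := by
  have hmem (f : D → ZMod 2) : f ∈ S.strandLabellings s ↔
      ∀ a b, S.edge a = b ∨ S.next s a = b → f a = f b := by
    refine ⟨fun hf a b hab => ?_, fun hf x => ⟨(hf x _ (.inl rfl)).symm, (hf x _ (.inr rfl)).symm⟩⟩
    rcases hab with rfl | rfl
    · exact (hf a).1.symm
    · exact (hf a).2.symm
  simp only [Connected, eqvGen_iff_forall_labelling_eq (R := ZMod 2), hmem]
  exact ⟨fun h f hf x y => h x y f hf, fun h x y f hf => h f hf x y⟩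

theorem jump_apply (x : D) (f : D → ZMod 2) : S.jump x f = f x + f (S.opposite x) := rfl

theorem jump_eq_zero_iff {x : D} : S.jump x f = 0 ↔ f (S.opposite x) = f x := by
  rw [jump_apply, CharTwo.add_eq_zero, eq_comm]

theorem apply_smooth_of_vertex_eq (hf : f ∈ S.strandLabellings s) {x e : D}
    (hx : S.vertex x = S.vertex e) : f (S.smooth (s (S.vertex e)) x) = f x := by
  rw [← hx]
  exact (hf x).2

theorem apply_opposite (hf : f ∈ S.strandLabellings s) (x : D) :
    f (S.opposite x) = f (S.smooth (!s (S.vertex x)) x) := by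
  rw [← smooth_smooth_not (s (S.vertex x)), apply_smooth_of_vertex_eq hf (vertex_smooth _ x)]

theorem jump_smooth (hf : f ∈ S.strandLabellings s) (i : Bool) (x : D) :
    S.jump (S.smooth i x) f = S.jump x f := by
  have hx : f (S.smooth (s (S.vertex x)) x) = f x := (hf x).2
  have hopp := apply_opposite hf x
  rw [jump_apply, jump_apply, opposite_smooth]
  rcases Bool.eq_or_eq_not i (s (S.vertex x)) with rfl | rfl
  · rw [hx, hopp]
  · rw [Bool.not_not, hx, hopp, add_comm]

theorem jump_eq_of_vertex_eq (hf : f ∈ S.strandLabellings s) {x y : D}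
    (h : S.vertex y = S.vertex x) : S.jump y f = S.jump x f := by
  rcases (S.vertex_eq_iff x y).1 h with rfl | rfl | rfl | rfl <;> simp only [jump_smooth hf]

theorem apply_smooth_of_jump_eq_zero (hf : f ∈ S.strandLabellings s) {x : D}
    (hx : S.jump x f = 0) (i : Bool) : f (S.smooth i x) = f x := by
  rcases Bool.eq_or_eq_not i (s (S.vertex x)) with rfl | rfl
  · exact (hf x).2
  · rw [← apply_opposite hf, jump_eq_zero_iff.1 hx]

theorem mem_strandLabellings_of_jump_eq_zero (hf : f ∈ S.strandLabellings s)
    (h : ∀ x, s (S.vertex x) ≠ t (S.vertex x) → S.jump x f = 0) : f ∈ S.strandLabellings t := by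
  refine fun x => ⟨(hf x).1, ?_⟩
  by_cases hx : s (S.vertex x) = t (S.vertex x)
  · rw [next, ← hx]
    exact (hf x).2
  · exact apply_smooth_of_jump_eq_zero hf (h x hx) _

theorem mem_strandLabellings_of_jump_eq_zero_of_forall_ne (hf : f ∈ S.strandLabellings s) {e : D}
    (he : S.jump e f = 0) (hst : ∀ v ≠ S.vertex e, s v = t v) : f ∈ S.strandLabellings t :=
  mem_strandLabellings_of_jump_eq_zero hf fun _ hx =>
    (jump_eq_of_vertex_eq hf (not_imp_comm.1 (hst _) hx)).trans he

theorem exists_jump_ne_zero (hf : f ∈ S.strandLabellings s) {x y : D} (hxy : f x ≠ f y)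
    (ht : S.Connected t) : ∃ e, s (S.vertex e) ≠ t (S.vertex e) ∧ S.jump e f ≠ 0 := by
  by_contra! h
  exact hxy (connected_iff.1 ht f (mem_strandLabellings_of_jump_eq_zero hf h) x y)

end Labellings

section Parity

variable [Finite D] {s t : V → Bool} {f g : D → ZMod 2}

theorem sum_eq_zero_of_next_invariant_off {F : Finset D} (hF : ∀ x, S.next s x ∈ F → x ∈ F)
    (hedge : ∀ x, f (S.edge x) = f x) (hnext : ∀ x ∉ F, f (S.next s x) = f x)
    (hfix : ∀ x ∉ F, S.next s x = x → f x = 0) : ∑ x ∈ F, f x = 0 := by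
  classical
  have := Fintype.ofFinite D
  have hall : ∑ x, f x = 0 :=
    sum_eq_zero_of_involutive S.edge_involutive (fun _ _ => Finset.mem_univ _)
      (fun x _ => hedge x) fun x _ hx => absurd hx (S.edge_ne x)
  have hcompl : ∑ x ∈ Fᶜ, f x = 0 :=
    sum_eq_zero_of_involutive (next_involutive s)
      (fun x hx => Finset.mem_compl.2 fun h => Finset.mem_compl.1 hx (hF x h))
      (fun x hx => hnext x (Finset.mem_compl.1 hx)) fun x hx => hfix x (Finset.mem_compl.1 hx)
  rwa [← Finset.sum_add_sum_compl F, hcompl, add_zero] at hall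

theorem apply_head_eq_apply_tail (hf : f ∈ S.strandLabellings s) : f S.head = f S.tail := by
  classical
  rcases eq_or_ne S.head S.tail with h | h
  · rw [h]
  have hsum : ∑ x ∈ {S.head, S.tail}, f x = 0 := by
    refine sum_eq_zero_of_next_invariant_off (s := s) (fun x hx => ?_) (fun x => (hf x).1)
      (fun x _ => (hf x).2) fun x hx hfix => absurd (eq_tail_or_eq_head_of_next_eq hfix) ?_
    · rw [Finset.mem_insert, Finset.mem_singleton] at hx
      rw [← next_involutive (S := S) s x]
      rcases hx with hx | hx
      · simp [hx, next_head]
      · simp [hx, next_tail]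
    · simpa [or_comm] using hx
  rwa [Finset.sum_pair h, CharTwo.add_eq_zero] at hsum

theorem jump_mul_jump_eq_zero (hf : f ∈ S.strandLabellings s) (hg : g ∈ S.strandLabellings t)
    {e : D} (hst : ∀ v ≠ S.vertex e, s v = t v) (he : s (S.vertex e) ≠ t (S.vertex e)) :
    S.jump e f * S.jump e g = 0 := by
  classical
  have := Fintype.ofFinite D
  rcases eq_or_ne e S.tail with rfl | htail
  · simp [jump_apply, opposite, S.smooth_tail, CharTwo.add_self_eq_zero]
  rcases eq_or_ne e S.head with rfl | hhead
  · simp [jump_apply, opposite, S.smooth_head, CharTwo.add_self_eq_zero]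
  have hsum : ∑ x with S.vertex x = S.vertex e, (f x - f S.tail) * g x = 0 := by
    refine sum_eq_zero_of_next_invariant_off (s := s) (fun x hx => ?_)
      (fun x => by rw [(hf x).1, (hg x).1]) (fun x hx => ?_) fun x _ hfix => ?_
    · simpa [vertex_next] using hx
    · have hgx : g (S.next s x) = g x := by
        rw [next, hst _ (by simpa using hx)]
        exact (hg x).2
      rw [(hf x).2, hgx]
    · rcases eq_tail_or_eq_head_of_next_eq hfix with rfl | rfl
      · rw [sub_self, zero_mul]
      · rw [apply_head_eq_apply_tail hf, sub_self, zero_mul]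
  have hte : t (S.vertex e) = !s (S.vertex e) := Bool.eq_not.2 he.symm
  have hfe : f (S.smooth (s (S.vertex e)) e) = f e := (hf e).2
  have hge : g (S.smooth (!s (S.vertex e)) e) = g e := hte ▸ (hg e).2
  have hgopp : g (S.opposite e) = g (S.smooth (s (S.vertex e)) e) := by
    rw [apply_opposite hg, hte, Bool.not_not]
  rw [sum_vertex_fiber (s (S.vertex e)) htail hhead, hfe, hge, ← hgopp, ← apply_opposite hf] at hsum
  rw [jump_apply, jump_apply]
  linear_combination hsum + f S.tail * (g e + g (S.opposite e)) * CharTwo.two_eq_zero (R := ZMod 2)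

end Parity

section Exchange

theorem connected_of_jump_ne_zero [Finite D] {s u t : V → Bool} {χ : D → ZMod 2} {a b : D}
    (hs : S.Connected s) (hsu : ∀ v ≠ S.vertex a, s v = u v) (hut : ∀ v ≠ S.vertex b, u v = t v)
    (hb : u (S.vertex b) ≠ t (S.vertex b)) (hχ : χ ∈ S.strandLabellings u)
    (hχa : S.jump a χ ≠ 0) (hχb : S.jump b χ ≠ 0) : S.Connected t := by
  refine connected_iff.2 fun g hg => ?_
  have hgb : S.jump b g = 0 :=
    (mul_eq_zero.1 (jump_mul_jump_eq_zero hχ hg hut hb)).resolve_left hχb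
  have hgu : g ∈ S.strandLabellings u :=
    mem_strandLabellings_of_jump_eq_zero_of_forall_ne hg hgb fun v hv => (hut v hv).symm
  have hja : S.jump a (g + S.jump a g • χ) = 0 := by
    have hχa' : S.jump a χ = 1 := Fin.eq_one_of_ne_zero _ hχa
    rw [map_add, map_smul, hχa', smul_eq_mul, mul_one, CharTwo.add_self_eq_zero]
  have hconst : ∀ x y, (g + S.jump a g • χ) x = (g + S.jump a g • χ) y :=
    connected_iff.1 hs _ <| mem_strandLabellings_of_jump_eq_zero_of_forall_ne
      (add_mem hgu (Submodule.smul_mem _ _ hχ)) hja fun v hv => (hsu v hv).symm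
  have hga : S.jump a g = 0 := by
    have hjb : S.jump b (g + S.jump a g • χ) = 0 := jump_eq_zero_iff.2 (hconst _ _)
    rw [map_add, map_smul, hgb, zero_add] at hjb
    exact (smul_eq_zero.1 hjb).resolve_right hχb
  simpa [hga] using hconst

theorem exists_connected_update_update [Finite D] [DecidableEq V] {s t : V → Bool}
    (hs : S.Connected s) (ht : S.Connected t) {d : V} (hd : s d ≠ t d) :
    ∃ e, s e ≠ t e ∧ S.Connected (update (update s d (t d)) e (t e)) := by
  set u := update s d (t d) with hu
  by_cases hconn : S.Connected u
  · exact ⟨d, hd, by simpa [hu] using hconn⟩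
  rw [connected_iff] at hconn
  push Not at hconn
  obtain ⟨χ, hχ, x, y, hxy⟩ := hconn
  obtain ⟨a, ha, hχa⟩ := exists_jump_ne_zero hχ hxy hs
  obtain ⟨b, hb, hχb⟩ := exists_jump_ne_zero hχ hxy ht
  obtain rfl : S.vertex a = d := by_contra fun h => ha (update_of_ne h _ _)
  have hba : S.vertex b ≠ S.vertex a := fun h => hb (by rw [h, hu, update_self])
  refine ⟨S.vertex b, by rwa [hu, update_of_ne hba] at hb,
    connected_of_jump_ne_zero hs (fun v hv => ?_) (fun v hv => ?_) ?_ hχ hχa hχb⟩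
  · rw [hu, update_of_ne hv]
  · rw [update_of_ne hv]
  · rwa [update_self]

end Exchange

namespace Trail

/-- The set of vertices at which two trails are smoothed differently. -/
def diff (A B : S.Trail) : Set V := {v | A.smoothing v ≠ B.smoothing v}

theorem mem_diff {A B : S.Trail} {v : V} : v ∈ A.diff B ↔ A.smoothing v ≠ B.smoothing v := Iff.rfl

theorem exists_exchange [Finite D] {A T : S.Trail} (hAT : A ≠ T) :
    ∃ B : S.Trail, ((A.diff B).ncard = 1 ∨ (A.diff B).ncard = 2) ∧ B.diff T ⊂ A.diff T := by
  classical
  obtain ⟨d, hd⟩ := ne_iff.1 fun h => hAT (Trail.ext h)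
  obtain ⟨e, he, hconn⟩ := exists_connected_update_update A.connected T.connected hd
  let B : S.Trail :=
    { smoothing := update (update A.smoothing d (T.smoothing d)) e (T.smoothing e)
      smoothing_tail := by grind [A.smoothing_tail, T.smoothing_tail]
      smoothing_head := by grind [A.smoothing_head, T.smoothing_head]
      connected := hconn }
  have hAB : A.diff B = {d, e} := by
    ext v
    rw [Set.mem_insert_iff, Set.mem_singleton_iff]
    grind [mem_diff]
  have hBT : B.diff T = A.diff T \ {d, e} := by
    ext v
    rw [Set.mem_sdiff, Set.mem_insert_iff, Set.mem_singleton_iff]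
    grind [mem_diff]
  refine ⟨B, ?_, ?_⟩
  · rw [hAB]
    rcases eq_or_ne d e with rfl | hde
    · simp
    · exact .inr (Set.ncard_pair hde)
  · rw [hBT]
    exact Set.sdiff_ssubset_left_iff.2 ⟨d, hd, by simp⟩

end Trail

end TransitionSystem

theorem trails_related_by_exchanges_general {D V : Type*} [Finite D] [Finite V]
    (S : TransitionSystem D V) (T₁ T₂ : S.Trail) :
    Relation.ReflTransGen
      (fun A B : S.Trail =>
        ((A.diff B).ncard = 1 ∨ (A.diff B).ncard = 2) ∧
        (B.diff T₂).ncard < (A.diff T₂).ncard) T₁ T₂ := by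
  induction h : (T₁.diff T₂).ncard using Nat.strong_induction_on generalizing T₁ with
  | _ n ih =>
    rcases eq_or_ne T₁ T₂ with rfl | hne
    · exact .refl
    obtain ⟨B, hcard, hsub⟩ := TransitionSystem.Trail.exists_exchange hne
    have hlt := Set.ncard_lt_ncard hsub
    exact .head ⟨hcard, hlt⟩ (ih _ (h ▸ hlt) B rfl)

namespace LinkoidUniverse

variable {U : LinkoidUniverse}

theorem sigma_sigma_eq (x : U.D) : U.σ (U.σ x) = U.σ.symm (U.σ.symm x) := by
  rw [Equiv.eq_symm_apply, Equiv.eq_symm_apply]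
  by_cases h : U.σ x = x
  · simp only [h]
  · exact (U.deg4 x h).1

theorem col_sigma_symm {x : U.D} (h : U.σ x ≠ x) : U.col (U.σ.symm x) = !U.col x := by
  have := U.col_alt (U.σ.symm x)
  rw [U.σ.apply_symm_apply] at this
  rw [this fun hx => h (U.σ.eq_symm_apply.1 hx), Bool.not_not]

theorem vertexOf_sigma (x : U.D) : U.vertexOf (U.σ x) = U.vertexOf x :=
  (Quot.sound (r := fun a b => U.σ a = b) rfl).symm

theorem vertexOf_eq_iff {x y : U.D} : U.vertexOf y = U.vertexOf x ↔
    y = x ∨ y = U.σ x ∨ y = U.σ.symm x ∨ y = U.σ (U.σ x) := by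
  refine ⟨fun h => ?_, ?_⟩
  · have hrot (z : U.D) : (z = x ∨ z = U.σ x ∨ z = U.σ.symm x ∨ z = U.σ (U.σ x)) =
        (U.σ z = x ∨ U.σ z = U.σ x ∨ U.σ z = U.σ.symm x ∨ U.σ z = U.σ (U.σ x)) := by
      rw [← U.σ.eq_symm_apply, U.σ.apply_eq_iff_eq, ← U.σ.eq_symm_apply, ← sigma_sigma_eq,
        U.σ.apply_eq_iff_eq]
      grind
    have hx := congrArg (Quot.lift _ fun z _ hz => hz ▸ hrot z) h
    exact hx.mpr (.inl rfl)
  · rintro (rfl | rfl | rfl | rfl)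
    · rfl
    · exact vertexOf_sigma x
    · rw [← vertexOf_sigma, U.σ.apply_symm_apply]
    · rw [vertexOf_sigma, vertexOf_sigma]

theorem trans_of_col_eq {b : U.D → Bool} {x : U.D} (h : U.col x = b x) : U.trans b x = U.σ x :=
  if_pos h

theorem trans_of_col_ne {b : U.D → Bool} {x : U.D} (h : U.col x ≠ b x) :
    U.trans b x = U.σ.symm x :=
  if_neg h

theorem trans_eq_self_iff {b : U.D → Bool} {x : U.D} : U.trans b x = x ↔ U.σ x = x := by
  by_cases h : U.col x = b x
  · rw [trans_of_col_eq h]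
  · rw [trans_of_col_ne h, Equiv.symm_apply_eq, eq_comm]

theorem col_trans {b : U.D → Bool} {x : U.D} (hx : U.σ x ≠ x) : U.col (U.trans b x) = !U.col x := by
  by_cases h : U.col x = b x
  · rw [trans_of_col_eq h, U.col_alt x hx]
  · rw [trans_of_col_ne h, col_sigma_symm hx]

theorem trans_const_involutive (i : Bool) : Involutive (U.trans fun _ => i) := fun x => by
  by_cases hx : U.σ x = x
  · have h := trans_eq_self_iff (b := fun _ => i).2 hx
    rw [h, h]
  have hcol := col_trans (b := fun _ => i) hx
  by_cases hi : U.col x = i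
  · rw [trans_of_col_ne (by simp [hcol, hi]), trans_of_col_eq hi, Equiv.symm_apply_apply]
  · rw [trans_of_col_eq (hcol.trans (Bool.eq_not.2 (Ne.symm hi)).symm), trans_of_col_ne hi,
      Equiv.apply_symm_apply]

theorem trans_const_trans_const_not (i : Bool) (x : U.D) :
    U.trans (fun _ => i) (U.trans (fun _ => !i) x) = U.σ (U.σ x) := by
  by_cases hx : U.σ x = x
  · simp only [trans_eq_self_iff.2 hx, hx]
  have hcol := col_trans (b := fun _ => !i) hx
  by_cases hi : U.col x = !i
  · rw [trans_of_col_eq (by simp [hcol, hi]), trans_of_col_eq hi]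
  · rw [trans_of_col_ne (by simpa [hcol] using hi), trans_of_col_ne hi, sigma_sigma_eq]

theorem trans_true_ne_trans_false {x : U.D} (hx : U.σ x ≠ x) :
    U.trans (fun _ => true) x ≠ U.trans (fun _ => false) x := fun h => (U.deg4 x hx).2 <| by
  have := trans_const_trans_const_not true x
  rw [Bool.not_true, ← h, trans_const_involutive] at this
  exact this.symm

theorem vertexOf_eq_iff_trans {x y : U.D} : U.vertexOf y = U.vertexOf x ↔
    y = x ∨ y = U.trans (fun _ => true) x ∨ y = U.trans (fun _ => false) x ∨
      y = U.trans (fun _ => true) (U.trans (fun _ => false) x) := by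
  have hopp := trans_const_trans_const_not true x
  rw [Bool.not_true] at hopp
  rw [hopp, vertexOf_eq_iff]
  cases hi : U.col x
  · rw [trans_of_col_ne (b := fun _ => true) (by simp [hi]), trans_of_col_eq hi]
    exact or_congr_right or_left_comm
  · rw [trans_of_col_eq hi, trans_of_col_ne (by simp [hi])]

theorem sigma_ne_of_ne {x : U.D} (ht : x ≠ U.tail) (hh : x ≠ U.head) : U.σ x ≠ x :=
  fun h => (U.endpoints_only x h).elim ht hh

instance : Finite U.Vertex := Finite.of_surjective U.vertexOf Quot.mk_surjective

variable (U) in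
/-- The transition system underlying a linkoid universe: its two smoothings at a vertex are the
non-crossing ones, and the excluded pairing is the crossing one. -/
def toTransitionSystem : TransitionSystem U.D U.Vertex where
  edge := U.α
  vertex := U.vertexOf
  smooth i := U.trans fun _ => i
  tail := U.tail
  head := U.head
  edge_involutive := U.α_invol
  edge_ne := U.α_ne
  smooth_involutive := trans_const_involutive
  smooth_comm x :=
    (trans_const_trans_const_not true x).trans (trans_const_trans_const_not false x).symm
  vertex_eq_iff _ _ := vertexOf_eq_iff_trans
  smooth_tail _ := trans_eq_self_iff.2 U.σ_tail
  smooth_head _ := trans_eq_self_iff.2 U.σ_head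
  smooth_ne _ _ ht hh h := sigma_ne_of_ne ht hh (trans_eq_self_iff.1 h)
  smooth_true_ne_smooth_false _ ht hh := trans_true_ne_trans_false (sigma_ne_of_ne ht hh)

/-- A trail of the underlying transition system, as a trail of the universe: the choice at a vertex
becomes a function on darts constant around that vertex. -/
def ofTransitionTrail (T : U.toTransitionSystem.Trail) : U.Trail where
  b d := T.smoothing (U.vertexOf d)
  const d := congrArg T.smoothing (vertexOf_sigma d)
  norm d hd := (U.endpoints_only d hd).elim (fun h => h ▸ T.smoothing_tail)
    fun h => h ▸ T.smoothing_head
  conn := T.connected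

theorem ofTransitionTrail_surjective : Surjective (ofTransitionTrail (U := U)) := fun T =>
  ⟨{ smoothing := Quot.lift T.b fun d _ hd => hd ▸ (T.const d).symm
     smoothing_tail := T.norm _ U.σ_tail
     smoothing_head := T.norm _ U.σ_head
     connected := T.conn }, rfl⟩

theorem diffSet_ofTransitionTrail (A B : U.toTransitionSystem.Trail) :
    U.diffSet (ofTransitionTrail A).b (ofTransitionTrail B).b = A.diff B := by
  ext v
  refine ⟨?_, fun hv => ?_⟩
  · rintro ⟨d, rfl, hd⟩
    exact hd
  · obtain ⟨d, rfl⟩ := Quot.mk_surjective v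
    exact ⟨d, rfl, hv⟩

end LinkoidUniverse

/-- any two trails of a 1-linkoid universe are related by a finite
sequence of single exchanges (resmoothing one site) or double exchanges (resmoothing
two sites), every intermediate object being a trail, and every move strictly
decreasing the number of sites at which the current trail differs from the target. -/
theorem trails_related_by_exchanges (U : LinkoidUniverse) (T1 T2 : U.Trail) :
    Relation.ReflTransGen
      (fun A B : U.Trail =>
        ((U.diffSet A.b B.b).ncard = 1 ∨ (U.diffSet A.b B.b).ncard = 2) ∧
        (U.diffSet B.b T2.b).ncard < (U.diffSet A.b T2.b).ncard) T1 T2 := by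
  obtain ⟨A, rfl⟩ := LinkoidUniverse.ofTransitionTrail_surjective T1
  obtain ⟨B, rfl⟩ := LinkoidUniverse.ofTransitionTrail_surjective T2
  refine (trails_related_by_exchanges_general U.toTransitionSystem A B).lift _ fun _ _ h => ?_
  simpa only [Function.onFun, LinkoidUniverse.diffSet_ofTransitionTrail] using h
end
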